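/- The fixed point sets of α, β and γ in T⁷ are pairwise disjoint: no point of T⁷ is fixed by two distinct elements of {α, β, γ}. -/

import Mathlib

/-- The 7-torus `T⁷ = (ℝ/ℤ)⁷`. -/
abbrev T7 : Type := Fin 7 → AddCircle (1 : ℝ)

/-- The element `½ ∈ ℝ/ℤ`. -/
noncomputable def half : AddCircle (1 : ℝ) := ((1 / 2 : ℝ) : AddCircle (1 : ℝ))

/-- `α(x) = (x₁, x₂, x₃, −x₄, −x₅, −x₆, −x₇)` on `T⁷` (with 0-based indexing). -/
noncomputable def tα : T7 → T7 := fun x => ![x 0, x 1, x 2, -x 3, -x 4, -x 5, -x 6]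

/-- `β(x) = (x₁, −x₂, −x₃, x₄, x₅, ½−x₆, −x₇)` on `T⁷` (with 0-based indexing). -/
noncomputable def tβ : T7 → T7 := fun x => ![x 0, -x 1, -x 2, x 3, x 4, half - x 5, -x 6]

/-- `γ(x) = (−x₁, x₂, −x₃, x₄, ½−x₅, x₆, ½−x₇)` on `T⁷` (with 0-based indexing). -/
noncomputable def tγ : T7 → T7 := fun x => ![-x 0, x 1, -x 2, x 3, half - x 4, x 5, half - x 6]

lemma tα_invol : Function.Involutive tα := by
  intro x; funext i
  fin_cases i
  · rfl
  · rfl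
  · rfl
  · exact neg_neg _
  · exact neg_neg _
  · exact neg_neg _
  · exact neg_neg _

lemma tβ_invol : Function.Involutive tβ := by
  intro x; funext i
  fin_cases i
  · rfl
  · exact neg_neg _
  · exact neg_neg _
  · rfl
  · rfl
  · exact sub_sub_cancel _ _
  · exact neg_neg _

lemma tγ_invol : Function.Involutive tγ := by
  intro x; funext i
  fin_cases i
  · exact neg_neg _
  · rfl
  · exact neg_neg _
  · rfl
  · exact sub_sub_cancel _ _
  · rfl
  · exact sub_sub_cancel _ _

/-- `α` as a bijection (element of the group of bijections) of `T⁷`. -/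
noncomputable def pα : Equiv.Perm T7 := Function.Involutive.toPerm tα tα_invol

/-- `β` as a bijection (element of the group of bijections) of `T⁷`. -/
noncomputable def pβ : Equiv.Perm T7 := Function.Involutive.toPerm tβ tβ_invol

/-- `γ` as a bijection (element of the group of bijections) of `T⁷`. -/
noncomputable def pγ : Equiv.Perm T7 := Function.Involutive.toPerm tγ tγ_invol

lemma half_ne_zero_circle : half ≠ 0 := by
  intro h
  unfold half at h
  rw [AddCircle.coe_eq_zero_iff] at h
  obtain ⟨n, hn⟩ := h
  rw [zsmul_eq_mul, mul_one] at hn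
  have h2 : (2 * n : ℝ) = 1 := by linarith
  have h3 : 2 * n = 1 := by exact_mod_cast h2
  omega

lemma no_common_fixed (y : AddCircle (1 : ℝ)) (h1 : -y = y) (h2 : half - y = y) : False := by
  apply half_ne_zero_circle
  have h3 : half - y = -y := h2.trans h1.symm
  rw [sub_eq_add_neg] at h3
  exact add_eq_right.mp h3

/-- No point of `T⁷` is fixed by two distinct elements of `{α, β, γ}`: the fixed point sets of
`α`, `β` and `γ` are pairwise disjoint. -/
theorem statement10 :
    (∀ x : T7, tα x = x → tβ x ≠ x) ∧
    (∀ x : T7, tα x = x → tγ x ≠ x) ∧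
    (∀ x : T7, tβ x = x → tγ x ≠ x) := by
  refine ⟨fun x h1 h2 => ?_, fun x h1 h2 => ?_, fun x h1 h2 => ?_⟩
  · exact no_common_fixed (x 5) (congrFun h1 5) (congrFun h2 5)
  · exact no_common_fixed (x 6) (congrFun h1 6) (congrFun h2 6)
  · exact no_common_fixed (x 6) (congrFun h1 6) (congrFun h2 6)
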